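/- arXiv:2012.02784 — 2 statements merged into one kernel-verified Lean document; each statement's English description precedes it below -/
import Mathlib

section
/- Let G and f be non-negative functions on [0, ∞) with f integrable on [0, ∞), and suppose there are constants K > 0 and r > 0 such that G(t) ≤ K + ∫₀ᵗ f(s) G(s)^{r+1} ds for all t ≥ 0 and such that r ∫₀^∞ f(s) ds < K^{-r}. Then G is uniformly bounded: G(t) ≤ (K^{-r} − r ∫₀^∞ f(s) ds)^{-1/r} for all t ≥ 0. -/
open MeasureTheory intervalIntegral

/-!
Let `H t = K + ∫₀ᵗ f G ^ (r + 1)`, so that `G ≤ H`. The function `H` is absolutely continuous and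
satisfies `H' = f G ^ (r + 1) ≤ f H ^ (r + 1)` almost everywhere. With `Φ' x = x ^ (-(r + 1))`, the
composition `Φ ∘ H` is again absolutely continuous, because `Φ` is Lipschitz on `[K, ∞)`, and its
derivative is at most `f`. Integrating, `Φ (H t) ≤ Φ K + ∫₀ᵗ f`, and solving for `H t` gives the
bound.
-/

open Set
open scoped NNReal

theorem absolutelyContinuousOnInterval_comp_of_lipschitzOnWith {X Y : Type*}
    [PseudoMetricSpace X] [PseudoMetricSpace Y] {Φ : X → Y} {u : ℝ → X} {s : Set X} {C : ℝ≥0}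
    {a b : ℝ} (hΦ : LipschitzOnWith C Φ s) (hu : AbsolutelyContinuousOnInterval u a b)
    (hmaps : MapsTo u (uIcc a b) s) : AbsolutelyContinuousOnInterval (Φ ∘ u) a b := by
  rw [absolutelyContinuousOnInterval_iff] at hu ⊢
  intro ε hε
  obtain ⟨δ, hδ, hsum⟩ := hu (ε / (C + 1)) (by positivity)
  refine ⟨δ, hδ, fun E hE hlen ↦ ?_⟩
  have hends := hE.1
  calc ∑ i ∈ Finset.range E.1, dist ((Φ ∘ u) (E.2 i).1) ((Φ ∘ u) (E.2 i).2)
      ≤ ∑ i ∈ Finset.range E.1, (C + 1) * dist (u (E.2 i).1) (u (E.2 i).2) := by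
        refine Finset.sum_le_sum fun i hi ↦ ?_
        refine (hΦ.dist_le_mul _ (hmaps (hends i hi).1) _ (hmaps (hends i hi).2)).trans ?_
        gcongr
        exact le_add_of_nonneg_right zero_le_one
    _ = (C + 1) * ∑ i ∈ Finset.range E.1, dist (u (E.2 i).1) (u (E.2 i).2) :=
        (Finset.mul_sum ..).symm
    _ < (C + 1) * (ε / (C + 1)) := by gcongr; exact hsum E hE hlen
    _ = ε := by field_simp

section Bihari

variable {ω Φ : ℝ → ℝ} {m K : ℝ}

theorem lipschitzOnWith_Ici_of_hasDerivAt_inv (hω : MonotoneOn ω (Ici K)) (hωK : 0 < ω K)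
    (hΦ : ∀ x ∈ Ici K, HasDerivAt Φ (ω x)⁻¹ x) :
    LipschitzOnWith (ω K)⁻¹.toNNReal Φ (Ici K) := by
  refine (convex_Ici K).lipschitzOnWith_of_nnnorm_hasDerivWithin_le
    (fun x hx ↦ (hΦ x hx).hasDerivWithinAt) fun x hx ↦ ?_
  have hωx : ω K ≤ ω x := hω self_mem_Ici hx hx
  rw [← NNReal.coe_le_coe, coe_nnnorm, Real.norm_of_nonneg (inv_nonneg.2 (hωK.le.trans hωx)),
    Real.coe_toNNReal _ (inv_nonneg.2 hωK.le)]
  gcongr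

theorem bihari_inequality {f G : ℝ → ℝ} {a b : ℝ} (hab : a ≤ b) (hmK : m ≤ K)
    (hω : MonotoneOn ω (Ici m)) (hωm : 0 ≤ ω m) (hωK : 0 < ω K)
    (hΦ : ∀ x ∈ Ici K, HasDerivAt Φ (ω x)⁻¹ x)
    (hf : ∀ t ∈ Icc a b, 0 ≤ f t) (hG : ∀ t ∈ Icc a b, m ≤ G t)
    (hfint : IntervalIntegrable f volume a b)
    (hint : IntervalIntegrable (fun s ↦ f s * ω (G s)) volume a b)
    (hineq : ∀ t ∈ Icc a b, G t ≤ K + ∫ s in a..t, f s * ω (G s)) :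
    Φ (K + ∫ s in a..b, f s * ω (G s)) ≤ Φ K + ∫ s in a..b, f s := by
  set H : ℝ → ℝ := fun t ↦ K + ∫ s in a..t, f s * ω (G s) with hH
  have hKH : ∀ t ∈ Icc a b, K ≤ H t := fun t ht ↦
    le_add_of_nonneg_right <| integral_nonneg ht.1 fun s hs ↦
      have hs' : s ∈ Icc a b := ⟨hs.1, hs.2.trans ht.2⟩
      mul_nonneg (hf s hs') (hωm.trans (hω self_mem_Ici (hG s hs') (hG s hs')))
  have hωIci : MonotoneOn ω (Ici K) := hω.mono (Ici_subset_Ici.2 hmK)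
  have hHac : AbsolutelyContinuousOnInterval H a b :=
    contDiffOn_const.absolutelyContinuousOnInterval.fun_add
      (hint.absolutelyContinuousOnInterval_intervalIntegral left_mem_uIcc)
  have hΦHac : AbsolutelyContinuousOnInterval (Φ ∘ H) a b :=
    absolutelyContinuousOnInterval_comp_of_lipschitzOnWith
      (lipschitzOnWith_Ici_of_hasDerivAt_inv hωIci hωK hΦ) hHac
      (by rwa [uIcc_of_le hab])
  have hderiv : ∀ᵐ x, x ∈ Icc a b → deriv (Φ ∘ H) x ≤ f x := by
    filter_upwards [hint.ae_hasDerivAt_integral] with x hx hmem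
    have hHderiv : HasDerivAt H (f x * ω (G x)) x :=
      (hx (Icc_subset_uIcc hmem) a left_mem_uIcc).const_add K
    have hωH : 0 < ω (H x) := hωK.trans_le (hωIci self_mem_Ici (hKH x hmem) (hKH x hmem))
    have hωGH : ω (G x) ≤ ω (H x) :=
      hω (hG x hmem) (hmK.trans (hKH x hmem)) (hineq x hmem)
    rw [((hΦ _ (hKH x hmem)).comp x hHderiv).deriv, inv_mul_le_iff₀ hωH, mul_comm]
    exact mul_le_mul_of_nonneg_right hωGH (hf x hmem)
  have hbound : Φ (H b) - Φ (H a) ≤ ∫ s in a..b, f s := by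
    rw [← Function.comp_apply (f := Φ), ← Function.comp_apply (f := Φ) (x := a),
      ← hΦHac.integral_deriv_eq_sub]
    exact integral_mono_ae_restrict hab hΦHac.intervalIntegrable_deriv hfint
      ((ae_restrict_iff' measurableSet_Icc).2 hderiv)
  have hHa : H a = K := by simp only [hH, integral_same, add_zero]
  rwa [hHa, sub_le_iff_le_add'] at hbound

end Bihari

/-- The primitive of `x ↦ x ^ (-(r + 1))` on `(0, ∞)` for `r ≠ 0`: the transform `Φ` that turns
`u' = f u ^ (r + 1)` into `(Φ ∘ u)' = f`. -/
noncomputable def powerTransform (r x : ℝ) : ℝ := -x ^ (-r) / r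

section PowerTransform

variable {r K I x : ℝ}

theorem hasDerivAt_powerTransform (hr : r ≠ 0) (hx : 0 < x) :
    HasDerivAt (powerTransform r) (x ^ (r + 1))⁻¹ x := by
  have hvalue : -(-r * x ^ (-r - 1)) / r = (x ^ (r + 1))⁻¹ := by
    rw [← Real.rpow_neg hx.le, neg_add']
    field_simp
  rw [← hvalue]
  exact (Real.hasDerivAt_rpow_const (Or.inl hx.ne')).fun_neg.div_const r

theorem strictMonoOn_powerTransform (hr : r ≠ 0) : StrictMonoOn (powerTransform r) (Ioi 0) := by
  refine strictMonoOn_of_deriv_pos (convex_Ioi 0)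
    (fun x hx ↦ (hasDerivAt_powerTransform hr hx).continuousAt.continuousWithinAt) fun x hx ↦ ?_
  have hx : 0 < x := by rwa [interior_Ioi] at hx
  rw [(hasDerivAt_powerTransform hr hx).deriv]
  positivity

theorem powerTransform_rpow_sub_mul (hr : r ≠ 0) (hI : r * I ≤ K ^ (-r)) :
    powerTransform r ((K ^ (-r) - r * I) ^ (-(1 / r))) = powerTransform r K + I := by
  have hexp : -(1 / r) * -r = 1 := by field_simp
  rw [powerTransform, powerTransform, ← Real.rpow_mul (sub_nonneg.2 hI), hexp, Real.rpow_one]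
  field_simp
  ring

theorem le_rpow_of_powerTransform_le_add (hr : r ≠ 0) (hx : 0 < x) (hI : r * I < K ^ (-r))
    (h : powerTransform r x ≤ powerTransform r K + I) :
    x ≤ (K ^ (-r) - r * I) ^ (-(1 / r)) := by
  rw [← powerTransform_rpow_sub_mul hr hI.le] at h
  exact ((strictMonoOn_powerTransform hr).le_iff_le hx
    (Real.rpow_pos_of_pos (sub_pos.2 hI) _)).1 h

end PowerTransform

theorem intervalIntegral_le_setIntegral_Ici {f : ℝ → ℝ} {a t : ℝ} (hat : a ≤ t)
    (hf : ∀ s ∈ Ici a, 0 ≤ f s) (hfint : IntegrableOn f (Ici a)) :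
    ∫ s in a..t, f s ≤ ∫ s in Ici a, f s := by
  rw [integral_of_le hat]
  exact setIntegral_mono_set hfint (ae_restrict_of_forall_mem measurableSet_Ici hf)
    (Ioc_subset_Ioi_self.trans Ioi_subset_Ici_self).eventuallyLE

theorem modified_gronwall_global_bound_general {G f : ℝ → ℝ} {K r : ℝ} (hK : 0 < K)
    (hr : -1 ≤ r) (hr₀ : r ≠ 0) (hG : ∀ t, 0 ≤ t → 0 ≤ G t) (hf : ∀ t, 0 ≤ t → 0 ≤ f t)
    (hfint : IntegrableOn f (Ici 0))
    (hint : ∀ t, 0 ≤ t → IntervalIntegrable (fun s ↦ f s * G s ^ (r + 1)) volume 0 t)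
    (hineq : ∀ t, 0 ≤ t → G t ≤ K + ∫ s in (0 : ℝ)..t, f s * G s ^ (r + 1))
    (hsmall : r * ∫ s in Ici (0 : ℝ), f s < K ^ (-r)) {t : ℝ} (ht : 0 ≤ t) :
    G t ≤ (K ^ (-r) - r * ∫ s in Ici (0 : ℝ), f s) ^ (-(1 / r)) := by
  have hfint_t : IntervalIntegrable f volume 0 t :=
    (intervalIntegrable_iff_integrableOn_Icc_of_le ht).2 (hfint.mono_set Icc_subset_Ici_self)
  have hmajorant_pos : 0 < K + ∫ s in (0 : ℝ)..t, f s * G s ^ (r + 1) :=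
    add_pos_of_pos_of_nonneg hK <| integral_nonneg ht fun s hs ↦
      mul_nonneg (hf s hs.1) (Real.rpow_nonneg (hG s hs.1) _)
  have htransform : powerTransform r (K + ∫ s in (0 : ℝ)..t, f s * G s ^ (r + 1)) ≤
      powerTransform r K + ∫ s in (0 : ℝ)..t, f s :=
    bihari_inequality (ω := (· ^ (r + 1))) ht hK.le
      (Real.monotoneOn_rpow_Ici_of_exponent_nonneg (by linarith))
      (Real.rpow_nonneg le_rfl _) (Real.rpow_pos_of_pos hK _)
      (fun x hx ↦ hasDerivAt_powerTransform hr₀ (hK.trans_le hx))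
      (fun s hs ↦ hf s hs.1) (fun s hs ↦ hG s hs.1) hfint_t (hint t ht)
      (fun s hs ↦ hineq s hs.1)
  exact (hineq t ht).trans <| le_rpow_of_powerTransform_le_add hr₀ hmajorant_pos hsmall <|
    htransform.trans <| by gcongr; exact intervalIntegral_le_setIntegral_Ici ht hf hfint

/-- Smallness-implies-global-boundedness consequence of the modified Gronwall
inequality. -/
theorem modified_gronwall_global_bound
    (G f : ℝ → ℝ) (K r : ℝ) (hK : 0 < K) (hr : 0 < r)
    (hG : ∀ t, 0 ≤ t → 0 ≤ G t)
    (hf : ∀ t, 0 ≤ t → 0 ≤ f t)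
    (hGmeas : Measurable G) (hfmeas : Measurable f)
    (hfint : IntegrableOn f (Set.Ici 0) volume)
    (hint : ∀ t, 0 ≤ t →
      IntervalIntegrable (fun s => f s * G s ^ (r + 1)) volume 0 t)
    (hineq : ∀ t, 0 ≤ t → G t ≤ K + ∫ s in (0:ℝ)..t, f s * G s ^ (r + 1))
    (hsmall : r * ∫ s in Set.Ici (0:ℝ), f s < K ^ (-r)) :
    ∀ t, 0 ≤ t →
      G t ≤ (K ^ (-r) - r * ∫ s in Set.Ici (0:ℝ), f s) ^ (-(1 / r)) := by
  exact fun t ht ↦ modified_gronwall_global_bound_general hK (by linarith) hr.ne' hG hf hfint hint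
    hineq hsmall ht
end

section
/- Consider the Galerkin system: let n ∈ ℕ, let λ₁, …, λₙ be positive reals, let m₀, m₁ > 0, and let α, β be nonzero reals with α/β > 0. Let h : [0, ∞) → ℝⁿ be twice differentiable and c : [0, ∞) → ℝⁿ be differentiable, satisfying for each k and all t ≥ 0: hₖ''(t) + (m₀ + m₁ Σⱼ λⱼ hⱼ(t)²) λₖ hₖ(t) = α λₖ cₖ(t) and cₖ'(t) + λₖ cₖ(t) + β λₖ hₖ'(t) = 0. Then for all t ≥ 0: Σₖ hₖ'(t)² + (m₀ + (m₁/2) Σₖ λₖ hₖ(t)²) Σₖ λₖ hₖ(t)² + (α/β) Σₖ cₖ(t)² + (2α/β) ∫₀ᵗ Σₖ λₖ cₖ(s)² ds ≤ Σₖ hₖ'(0)² + (m₀ + (m₁/2) Σₖ λₖ hₖ(0)²) Σₖ λₖ hₖ(0)² + (α/β) Σₖ cₖ(0)². -/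
open Finset MeasureTheory intervalIntegral

/-!
Multiply the `k`-th wave equation by `2 hₖ'` and the `k`-th heat equation by `2 (α / β) cₖ`, and sum
over `k`. The factor `α / β` makes the coupling terms `± 2 α ∑ λₖ cₖ hₖ'` cancel, and the nonlinear
term is the derivative of a potential `Φ` of `∑ λₖ hₖ²`, where `Φ' = M` is the stiffness. So the
energy decreases at the exact rate `(2 α / β) ∑ λₖ cₖ²`; integrating in time gives an identity.
-/

theorem hasDerivWithinAt_sum_mul_sq {ι 𝕜 𝔸 : Type*} [Fintype ι] [NontriviallyNormedField 𝕜]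
    [NormedCommRing 𝔸] [NormedAlgebra 𝕜 𝔸] (w : ι → 𝔸) {f : ι → 𝕜 → 𝔸} {f' : ι → 𝔸} {s : Set 𝕜}
    {t : 𝕜} (hf : ∀ k, HasDerivWithinAt (f k) (f' k) s t) :
    HasDerivWithinAt (fun r => ∑ k, w k * f k r ^ 2) (2 * ∑ k, w k * (f k t * f' k)) s t := by
  rw [Finset.mul_sum]
  refine HasDerivWithinAt.fun_sum fun k _ => (((hf k).pow 2).const_mul (w k)).congr_deriv ?_
  push_cast
  ring

theorem hasDerivWithinAt_sum_sq {ι 𝕜 𝔸 : Type*} [Fintype ι] [NontriviallyNormedField 𝕜]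
    [NormedCommRing 𝔸] [NormedAlgebra 𝕜 𝔸] {f : ι → 𝕜 → 𝔸} {f' : ι → 𝔸} {s : Set 𝕜} {t : 𝕜}
    (hf : ∀ k, HasDerivWithinAt (f k) (f' k) s t) :
    HasDerivWithinAt (fun r => ∑ k, f k r ^ 2) (2 * ∑ k, f k t * f' k) s t := by
  simpa only [one_mul] using hasDerivWithinAt_sum_mul_sq (fun _ => 1) hf

section KirchhoffHeat

variable {ι : Type*} [Fintype ι]

/-- The squared gradient norm `∫_Ω |∇u(t)|²` of `u = ∑ xₖ eₖ`, where the `eₖ` are orthonormal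
Dirichlet eigenfunctions with eigenvalues `lam k`. -/
def dirichletEnergy (lam : ι → ℝ) (x : ι → ℝ → ℝ) (t : ℝ) : ℝ :=
  ∑ k, lam k * x k t ^ 2

/-- The Galerkin system of the Kirchhoff–heat equations on the time set `s`, with a general
stiffness `M` in place of `m₀ + m₁ r`. It is written in first-order form: `h`, `v` and `c` are the
coefficients of displacement, velocity and temperature. Derivatives are taken within `s`, so that
they are one-sided at the endpoints of an interval. -/
structure IsKirchhoffHeatSolutionOn (lam : ι → ℝ) (M : ℝ → ℝ) (α β : ℝ) (h v c : ι → ℝ → ℝ)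
    (s : Set ℝ) : Prop where
  displacement : ∀ k, ∀ t ∈ s, HasDerivWithinAt (h k) (v k t) s t
  velocity : ∀ k, ∀ t ∈ s, HasDerivWithinAt (v k)
    (α * lam k * c k t - M (dirichletEnergy lam h t) * lam k * h k t) s t
  temperature : ∀ k, ∀ t ∈ s, HasDerivWithinAt (c k)
    (-(lam k * c k t) - β * lam k * v k t) s t

/-- The first-order energy of a Kirchhoff–heat system whose stiffness is the derivative of `Φ`:
kinetic, elastic and thermal parts, the last one weighted by `α / β`. -/
noncomputable def kirchhoffHeatEnergy (lam : ι → ℝ) (Φ : ℝ → ℝ) (α β : ℝ)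
    (h v c : ι → ℝ → ℝ) (t : ℝ) : ℝ :=
  ∑ k, v k t ^ 2 + Φ (dirichletEnergy lam h t) + (α / β) * ∑ k, c k t ^ 2

namespace IsKirchhoffHeatSolutionOn

variable {lam : ι → ℝ} {M Φ : ℝ → ℝ} {α β : ℝ} {h v c : ι → ℝ → ℝ} {s : Set ℝ} {t : ℝ}

theorem of_deriv (hdiff : ∀ k, Differentiable ℝ (h k))
    (hdiff' : ∀ k, Differentiable ℝ (deriv (h k))) (cdiff : ∀ k, Differentiable ℝ (c k))
    (wave : ∀ k, ∀ t ∈ s,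
      deriv (deriv (h k)) t + M (dirichletEnergy lam h t) * lam k * h k t = α * lam k * c k t)
    (heat : ∀ k, ∀ t ∈ s, deriv (c k) t + lam k * c k t + β * lam k * deriv (h k) t = 0) :
    IsKirchhoffHeatSolutionOn lam M α β h (fun k => deriv (h k)) c s where
  displacement k t _ := (hdiff k t).hasDerivAt.hasDerivWithinAt
  velocity k t ht := (hdiff' k t).hasDerivAt.hasDerivWithinAt.congr_deriv
    (eq_sub_of_add_eq (wave k t ht))
  temperature k t ht := (cdiff k t).hasDerivAt.hasDerivWithinAt.congr_deriv
    (by linear_combination heat k t ht)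

theorem continuousOn_dirichletEnergy_temperature
    (sol : IsKirchhoffHeatSolutionOn lam M α β h v c s) :
    ContinuousOn (dirichletEnergy lam c) s :=
  fun t ht => (hasDerivWithinAt_sum_mul_sq lam (sol.temperature · t ht)).continuousWithinAt

theorem hasDerivWithinAt_kinetic (sol : IsKirchhoffHeatSolutionOn lam M α β h v c s)
    (ht : t ∈ s) :
    HasDerivWithinAt (fun r => ∑ k, v k r ^ 2)
      (2 * (α * ∑ k, lam k * (c k t * v k t)
        - M (dirichletEnergy lam h t) * ∑ k, lam k * (h k t * v k t))) s t := by
  refine (hasDerivWithinAt_sum_sq (sol.velocity · t ht)).congr_deriv (congrArg (2 * ·) ?_)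
  simp only [Finset.mul_sum, ← Finset.sum_sub_distrib]
  exact Finset.sum_congr rfl fun k _ => by ring

theorem hasDerivWithinAt_elastic (sol : IsKirchhoffHeatSolutionOn lam M α β h v c s)
    (ht : t ∈ s)
    (hΦ : HasDerivAt Φ (M (dirichletEnergy lam h t)) (dirichletEnergy lam h t)) :
    HasDerivWithinAt (fun r => Φ (dirichletEnergy lam h r))
      (M (dirichletEnergy lam h t) * (2 * ∑ k, lam k * (h k t * v k t))) s t :=
  hΦ.comp_hasDerivWithinAt t (hasDerivWithinAt_sum_mul_sq lam (sol.displacement · t ht))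

theorem hasDerivWithinAt_thermal (sol : IsKirchhoffHeatSolutionOn lam M α β h v c s)
    (ht : t ∈ s) :
    HasDerivWithinAt (fun r => ∑ k, c k r ^ 2)
      (2 * (-dirichletEnergy lam c t - β * ∑ k, lam k * (c k t * v k t))) s t := by
  refine (hasDerivWithinAt_sum_sq (sol.temperature · t ht)).congr_deriv (congrArg (2 * ·) ?_)
  simp only [dirichletEnergy, Finset.mul_sum, ← Finset.sum_neg_distrib, ← Finset.sum_sub_distrib]
  exact Finset.sum_congr rfl fun k _ => by ring

theorem hasDerivWithinAt_energy (sol : IsKirchhoffHeatSolutionOn lam M α β h v c s)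
    (hβ : β ≠ 0) (ht : t ∈ s)
    (hΦ : HasDerivAt Φ (M (dirichletEnergy lam h t)) (dirichletEnergy lam h t)) :
    HasDerivWithinAt (kirchhoffHeatEnergy lam Φ α β h v c)
      (-((2 * α / β) * dirichletEnergy lam c t)) s t := by
  refine (((sol.hasDerivWithinAt_kinetic ht).add (sol.hasDerivWithinAt_elastic ht hΦ)).add
    ((sol.hasDerivWithinAt_thermal ht).const_mul (α / β))).congr_deriv ?_
  field_simp
  ring

end IsKirchhoffHeatSolutionOn

theorem galerkin_first_order_estimate_general {lam : ι → ℝ} {M Φ : ℝ → ℝ} {α β : ℝ}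
    {h v c : ι → ℝ → ℝ} {a b : ℝ} (hab : a ≤ b)
    (sol : IsKirchhoffHeatSolutionOn lam M α β h v c (Set.Icc a b))
    (hΦ : ∀ r, HasDerivAt Φ (M r) r) (hβ : β ≠ 0) :
    kirchhoffHeatEnergy lam Φ α β h v c b + (2 * α / β) * ∫ t in a..b, dirichletEnergy lam c t
      = kirchhoffHeatEnergy lam Φ α β h v c a := by
  have energy_deriv t (ht : t ∈ Set.Icc a b) := sol.hasDerivWithinAt_energy hβ ht (hΦ _)
  have dissipation_continuous : ContinuousOn
      (fun t => -((2 * α / β) * dirichletEnergy lam c t)) (Set.Icc a b) :=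
    (sol.continuousOn_dirichletEnergy_temperature.const_mul _).neg
  have energy_balance := integral_eq_sub_of_hasDerivAt_of_le hab
    (fun t ht => (energy_deriv t ht).continuousWithinAt)
    (fun t ht => (energy_deriv t (Set.Ioo_subset_Icc_self ht)).hasDerivAt (Icc_mem_nhds ht.1 ht.2))
    (dissipation_continuous.intervalIntegrable_of_Icc hab)
  rw [intervalIntegral.integral_neg, intervalIntegral.integral_const_mul] at energy_balance
  linarith only [energy_balance]

end KirchhoffHeat

theorem hasDerivAt_affine_stiffness_potential (m₀ m₁ r : ℝ) :
    HasDerivAt (fun r => (m₀ + (m₁ / 2) * r) * r) (m₀ + m₁ * r) r := by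
  refine ((((hasDerivAt_id' r).const_mul (m₁ / 2)).const_add m₀).mul
    (hasDerivAt_id' r)).congr_deriv ?_
  ring

/-- First-order a priori estimate (F1) for the Galerkin approximations of the
coupled non-degenerate Kirchhoff–heat system. -/
theorem galerkin_first_order_estimate
    (n : ℕ) (lam : Fin n → ℝ) (hlam : ∀ k, 0 < lam k)
    (m₀ m₁ α β : ℝ) (hm₀ : 0 < m₀) (hm₁ : 0 < m₁) (hα : α ≠ 0) (hβ : β ≠ 0)
    (hsign : 0 < α / β)
    (h c : Fin n → ℝ → ℝ)
    (hdiff : ∀ k, Differentiable ℝ (h k))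
    (hdiff' : ∀ k, Differentiable ℝ (deriv (h k)))
    (cdiff : ∀ k, Differentiable ℝ (c k))
    (heq : ∀ k, ∀ t, 0 ≤ t →
      deriv (deriv (h k)) t
        + (m₀ + m₁ * ∑ j, lam j * (h j t) ^ 2) * lam k * h k t
        = α * lam k * c k t)
    (ceq : ∀ k, ∀ t, 0 ≤ t →
      deriv (c k) t + lam k * c k t + β * lam k * deriv (h k) t = 0) :
    ∀ t, 0 ≤ t →
      (∑ k, (deriv (h k) t) ^ 2)
        + (m₀ + (m₁ / 2) * ∑ k, lam k * (h k t) ^ 2) * (∑ k, lam k * (h k t) ^ 2)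
        + (α / β) * ∑ k, (c k t) ^ 2
        + (2 * α / β) * ∫ s in (0:ℝ)..t, ∑ k, lam k * (c k s) ^ 2
      ≤ (∑ k, (deriv (h k) 0) ^ 2)
        + (m₀ + (m₁ / 2) * ∑ k, lam k * (h k 0) ^ 2) * (∑ k, lam k * (h k 0) ^ 2)
        + (α / β) * ∑ k, (c k 0) ^ 2 := by
  intro t ht
  have sol := IsKirchhoffHeatSolutionOn.of_deriv (M := fun r => m₀ + m₁ * r) (s := Set.Icc 0 t)
    hdiff hdiff' cdiff (fun k r hr => heq k r hr.1) (fun k r hr => ceq k r hr.1)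
  exact (galerkin_first_order_estimate_general ht sol
    (hasDerivAt_affine_stiffness_potential m₀ m₁) hβ).le
end
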